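/- arXiv:2103.15000 — 2 statements merged into one kernel-verified Lean document; each statement's English description precedes it below -/
import Mathlib

section
/- Second Fundamental Theorem for the GFD of arbitrary order (Caputo case): Let n ∈ ℕ and let (κ, k) be a pair of kernels from L_n. Then for every f ∈ Cⁿ_{−1}(0,∞) and every t > 0, (I_{(κ)} ∗D_{(k)} f)(t) = f(t) − ∑_{j=0}^{n−1} f^{(j)}(0) h_{j+1}(t), where f^{(j)}(0) denotes the limit of f^{(j)}(t) as t → 0+ and h_{j+1}(t) = t^{j}/j!. -/
open Real MeasureTheory Set Filter Topology

/-- The Laplace convolution `(f * g)(t) = ∫₀ᵗ f(t-τ) g(τ) dτ`. -/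
noncomputable def lconv (f g : ℝ → ℝ) : ℝ → ℝ :=
  fun t => ∫ τ in (0:ℝ)..t, f (t - τ) * g τ

/-- The space `C_{-1}(0,∞)`: functions of the form `t^p f₁(t)` with `p > -1`
and `f₁` continuous on `[0,∞)`. -/
def Cm1 (f : ℝ → ℝ) : Prop :=
  ∃ p : ℝ, -1 < p ∧ ∃ f₁ : ℝ → ℝ, ContinuousOn f₁ (Set.Ici 0) ∧
    ∀ t : ℝ, 0 < t → f t = t ^ p * f₁ t

/-- The subspace `C_{-1,0}(0,∞)`: functions of the form `t^p f₁(t)` with `-1 < p < 0`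
and `f₁` continuous on `[0,∞)`. -/
def Cm10 (f : ℝ → ℝ) : Prop :=
  ∃ p : ℝ, -1 < p ∧ p < 0 ∧ ∃ f₁ : ℝ → ℝ, ContinuousOn f₁ (Set.Ici 0) ∧
    ∀ t : ℝ, 0 < t → f t = t ^ p * f₁ t

/-!
Taylor's formula at `0+` with integral remainder reads `f - T = h_n * f⁽ⁿ⁾`, where `T` is the
Taylor polynomial and `h_n(t) = t^{n-1}/(n-1)!` is the kernel of the `n`-fold integral. Since
convolution is commutative and associative, `k * (f - T) = h_n * (k * f⁽ⁿ⁾)`, and differentiating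
`n` times gives `∗D_{(k)} f = k * f⁽ⁿ⁾`. Hence
`κ * ∗D_{(k)} f = (κ * k) * f⁽ⁿ⁾ = h_n * f⁽ⁿ⁾ = f - T`.

To have these identities at every `t > 0` and not just almost everywhere, one needs convolutions to
be continuous on `(0,∞)` although both factors may be singular at `0`.
-/

/-- The continuous functions on `(0,∞)` that are integrable on every `(0,T]`. This class contains
`C_{-1}(0,∞)` and is closed under Laplace convolution; values on `(-∞,0]` are irrelevant. -/
structure ContinuousLocallyIntegrable (f : ℝ → ℝ) : Prop where
  continuousOn : ContinuousOn f (Ioi 0)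
  intervalIntegrable : ∀ T : ℝ, 0 < T → IntervalIntegrable f volume 0 T

/-- The power function `t ↦ t^m/m!`, which is the kernel `h_{m+1}` of the `(m+1)`-fold integral. -/
noncomputable def monomialKernel (m : ℕ) (t : ℝ) : ℝ :=
  t ^ m / m.factorial

theorem monomialKernel_zero : monomialKernel 0 = fun _ => 1 := by
  ext t
  simp [monomialKernel]

theorem Cm10.cm1 {f : ℝ → ℝ} (hf : Cm10 f) : Cm1 f := by
  obtain ⟨p, hp, -, hf₁⟩ := hf
  exact ⟨p, hp, hf₁⟩

namespace ContinuousLocallyIntegrable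

variable {f g : ℝ → ℝ}

theorem congr (hf : ContinuousLocallyIntegrable f) (hfg : EqOn f g (Ioi 0)) :
    ContinuousLocallyIntegrable g where
  continuousOn := hf.continuousOn.congr hfg.symm
  intervalIntegrable T hT := (hf.intervalIntegrable T hT).congr fun _ ht =>
    hfg (uIoc_of_le hT.le ▸ ht).1

theorem of_continuous (hf : Continuous f) : ContinuousLocallyIntegrable f :=
  ⟨hf.continuousOn, fun _ _ => hf.intervalIntegrable _ _⟩

theorem add (hf : ContinuousLocallyIntegrable f) (hg : ContinuousLocallyIntegrable g) :
    ContinuousLocallyIntegrable (fun t => f t + g t) :=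
  ⟨hf.continuousOn.add hg.continuousOn,
    fun T hT => (hf.intervalIntegrable T hT).add (hg.intervalIntegrable T hT)⟩

theorem norm (hf : ContinuousLocallyIntegrable f) :
    ContinuousLocallyIntegrable (fun t => ‖f t‖) :=
  ⟨hf.continuousOn.norm, fun T hT => (hf.intervalIntegrable T hT).norm⟩

theorem measurable_indicator (hf : ContinuousLocallyIntegrable f) :
    Measurable (indicator (Ioi 0) f) := by
  rw [← piecewise_eq_indicator]
  exact hf.continuousOn.measurable_piecewise continuousOn_const measurableSet_Ioi

theorem continuousAt_indicator (hf : ContinuousLocallyIntegrable f) {t : ℝ} (ht : 0 < t) :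
    ContinuousAt (indicator (Ioi 0) f) t :=
  (hf.continuousOn.continuousAt (Ioi_mem_nhds ht)).congr
    (eqOn_indicator.symm.eventuallyEq_of_mem (Ioi_mem_nhds ht))

theorem intervalIntegrable_indicator (hf : ContinuousLocallyIntegrable f) {a b : ℝ}
    (ha : a ≤ 0) (hb : 0 < b) : IntervalIntegrable (indicator (Ioi 0) f) volume a b := by
  rw [intervalIntegrable_iff_integrableOn_Ioc_of_le (ha.trans hb.le),
    integrableOn_indicator_iff measurableSet_Ioi, inter_comm, Ioc_inter_Ioi, sup_of_le_right ha]
  exact (intervalIntegrable_iff_integrableOn_Ioc_of_le hb.le).1 (hf.intervalIntegrable b hb)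

end ContinuousLocallyIntegrable

theorem continuousLocallyIntegrable_monomialKernel (m : ℕ) :
    ContinuousLocallyIntegrable (monomialKernel m) :=
  .of_continuous (by unfold monomialKernel; fun_prop)

theorem Cm1.continuousLocallyIntegrable {f : ℝ → ℝ} (hf : Cm1 f) :
    ContinuousLocallyIntegrable f := by
  obtain ⟨p, hp, f₁, hf₁, hf_eq⟩ := hf
  have hpow : ContinuousLocallyIntegrable (fun t => t ^ p * f₁ t) := by
    refine ⟨?_, fun T hT => ?_⟩
    · exact (continuousOn_id.rpow_const fun t ht => Or.inl (ne_of_gt ht)).mul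
        (hf₁.mono Ioi_subset_Ici_self)
    · refine (intervalIntegral.intervalIntegrable_rpow' hp).mul_continuousOn ?_
      rw [uIcc_of_le hT.le]
      exact hf₁.mono Icc_subset_Ici_self
  exact hpow.congr fun t ht => (hf_eq t ht).symm

section LaplaceConvolution

variable {f g h f' g' : ℝ → ℝ} {t : ℝ}

theorem lconv_comm (f g : ℝ → ℝ) : lconv f g = lconv g f := by
  ext t
  have hsub := intervalIntegral.integral_comp_sub_left (a := 0) (b := t)
    (fun τ => g (t - τ) * f τ) t
  simp only [sub_sub_cancel, sub_zero, sub_self] at hsub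
  simp only [lconv, mul_comm (f _), hsub]

theorem lconv_congr (ht : 0 ≤ t) (hf : EqOn f f' (Ioo 0 t)) (hg : EqOn g g' (Ioo 0 t)) :
    lconv f g t = lconv f' g' t :=
  intervalIntegral.integral_congr_Ioo_of_le ht fun τ hτ => by
    simp only [hg hτ, hf (⟨sub_pos.2 hτ.2, sub_lt_self t hτ.1⟩ : t - τ ∈ Ioo 0 t)]

theorem eqOn_lconv (hf : EqOn f f' (Ioi 0)) (hg : EqOn g g' (Ioi 0)) :
    EqOn (lconv f g) (lconv f' g') (Ioi 0) := fun _ ht =>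
  lconv_congr (le_of_lt ht) (hf.mono Ioo_subset_Ioi_self) (hg.mono Ioo_subset_Ioi_self)

theorem posConvolution_mul (f g : ℝ → ℝ) :
    posConvolution f g (ContinuousLinearMap.mul ℝ ℝ) = indicator (Ioi 0) (lconv f g) := by
  rw [lconv_comm]
  unfold posConvolution lconv
  simp only [ContinuousLinearMap.mul_apply', mul_comm (f _)]

theorem intervalIntegrable_lconv {T : ℝ} (hT : 0 ≤ T) (hf : IntervalIntegrable f volume 0 T)
    (hg : IntervalIntegrable g volume 0 T) : IntervalIntegrable (lconv f g) volume 0 T := by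
  have integrableOn_truncation {φ : ℝ → ℝ} (hφ : IntervalIntegrable φ volume 0 T) :
      IntegrableOn (indicator (Ioc 0 T) φ) (Ioi 0) :=
    (((intervalIntegrable_iff_integrableOn_Ioc_of_le hT).1 hφ).integrable_indicator
      measurableSet_Ioc).integrableOn
  have hconv := integrable_posConvolution (integrableOn_truncation hf)
    (integrableOn_truncation hg) (ContinuousLinearMap.mul ℝ ℝ)
  rw [posConvolution_mul] at hconv
  refine (hconv.intervalIntegrable (a := 0) (b := T)).congr fun t ht => ?_
  rw [uIoc_of_le hT] at ht
  have hsub : Ioo 0 t ⊆ Ioc 0 T := fun s hs => ⟨hs.1, hs.2.le.trans ht.2⟩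
  rw [indicator_of_mem (mem_Ioi.2 ht.1)]
  exact lconv_congr ht.1.le (fun s hs => indicator_of_mem (hsub hs) f)
    (fun s hs => indicator_of_mem (hsub hs) g)

theorem intervalIntegrable_comp_sub_mul (hf : ContinuousLocallyIntegrable f)
    (hg : ContinuousLocallyIntegrable g) (ht : 0 < t) :
    IntervalIntegrable (fun τ => f (t - τ) * g τ) volume 0 t := by
  have left_half {φ ψ : ℝ → ℝ} (hφ : ContinuousLocallyIntegrable φ)
      (hψ : ContinuousLocallyIntegrable ψ) :
      IntervalIntegrable (fun τ => φ (t - τ) * ψ τ) volume 0 (t / 2) := by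
    refine (hψ.intervalIntegrable _ (half_pos ht)).continuousOn_mul
      (hφ.continuousOn.comp (by fun_prop) fun τ hτ => ?_)
    rw [uIcc_of_le (half_pos ht).le] at hτ
    exact mem_Ioi.2 (by linarith [hτ.2])
  have right_half := (left_half hg hf).symm.comp_sub_left t
  simp only [sub_zero, sub_sub_cancel, sub_half] at right_half
  exact (left_half hf hg).trans (by simpa only [mul_comm] using right_half)

/- On each half only one factor comes near its possible singularity at `0`. -/
theorem lconv_eq_integral_half_add (hf : ContinuousLocallyIntegrable f)
    (hg : ContinuousLocallyIntegrable g) (ht : 0 < t) :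
    lconv f g t = (∫ τ in (0 : ℝ)..t / 2, f (t - τ) * g τ) +
      ∫ τ in (0 : ℝ)..t / 2, g (t - τ) * f τ := by
  have hint := intervalIntegrable_comp_sub_mul hf hg ht
  have hmid : t / 2 ∈ uIcc 0 t := by
    rw [uIcc_of_le ht.le]
    constructor <;> linarith
  have hreflect := intervalIntegral.integral_comp_sub_left (a := t / 2) (b := t)
    (fun τ => g (t - τ) * f τ) t
  simp only [sub_sub_cancel, sub_self, sub_half] at hreflect
  rw [← hreflect, lconv, ← intervalIntegral.integral_add_adjacent_intervals
    (hint.mono_set (uIcc_subset_uIcc left_mem_uIcc hmid))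
    (hint.mono_set (uIcc_subset_uIcc hmid right_mem_uIcc))]
  simp only [mul_comm]

/- `f (x - τ)` stays in a compact part of `(0,∞)` because `b < t`, so `g` up to a constant dominates
the integrand. The extension by zero puts the endpoint `0` inside an open interval. -/
theorem continuousAt_integral_indicator (hf : ContinuousLocallyIntegrable f)
    (hg : ContinuousLocallyIntegrable g) {b : ℝ} (hb : 0 < b) (hbt : b < t) :
    ContinuousAt (fun p : ℝ × ℝ =>
      ∫ τ in (0 : ℝ)..p.2, indicator (Ioi 0) f (p.1 - τ) * indicator (Ioi 0) g τ) (t, b) := by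
  obtain ⟨b', hbb', hb't⟩ := exists_between hbt
  obtain ⟨ε, hε, hεt⟩ := exists_between (sub_pos.2 hb't)
  have hpos : Icc (t - b' - ε) (t + ε) ⊆ Ioi 0 := fun s hs => mem_Ioi.2 (by linarith [hs.1])
  obtain ⟨M, hM⟩ := isCompact_Icc.exists_bound_of_continuousOn (hf.continuousOn.mono hpos)
  have hg_int := hg.intervalIntegrable_indicator neg_one_lt_zero.le (hb.trans hbb')
  refine intervalIntegral.continuousAt_parametric_primitive_of_dominated
    (F := fun x τ => indicator (Ioi 0) f (x - τ) * indicator (Ioi 0) g τ)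
    (fun τ => M * ‖indicator (Ioi 0) g τ‖) (-1) b' (fun x => ?_) ?_ (hg_int.norm.const_mul M) ?_
    ⟨neg_one_lt_zero, hb.trans hbb'⟩ ⟨by linarith, hbb'⟩ (measure_singleton b)
  · exact ((hf.measurable_indicator.comp (measurable_const.sub measurable_id)).mul
      hg.measurable_indicator).aestronglyMeasurable
  · filter_upwards [Icc_mem_nhds (sub_lt_self t hε) (lt_add_of_pos_right t hε)] with x hx
    refine (ae_restrict_iff' measurableSet_uIoc).2 (Eventually.of_forall fun τ hτ => ?_)
    rw [uIoc_of_le (by linarith)] at hτ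
    rcases le_or_gt τ 0 with hτ0 | hτ0
    · simp [hτ0]
    · have hxτ : x - τ ∈ Icc (t - b' - ε) (t + ε) :=
        ⟨by linarith [hx.1, hτ.2], by linarith [hx.2]⟩
      rw [norm_mul, indicator_of_mem (hpos hxτ)]
      exact mul_le_mul_of_nonneg_right (hM _ hxτ) (norm_nonneg _)
  · refine (ae_restrict_iff' measurableSet_uIoc).2 (Eventually.of_forall fun τ hτ => ?_)
    rw [uIoc_of_le (by linarith)] at hτ
    have hf_at := hf.continuousAt_indicator (show 0 < t - τ by linarith [hτ.2])
    exact (ContinuousAt.comp (f := fun x => x - τ) hf_at (by fun_prop)).mul continuousAt_const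

theorem continuousOn_integral_half (hf : ContinuousLocallyIntegrable f)
    (hg : ContinuousLocallyIntegrable g) :
    ContinuousOn (fun t => ∫ τ in (0 : ℝ)..t / 2, f (t - τ) * g τ) (Ioi 0) := by
  have hcont : ContinuousOn (fun t => ∫ τ in (0 : ℝ)..t / 2,
      indicator (Ioi 0) f (t - τ) * indicator (Ioi 0) g τ) (Ioi 0) := fun t ht =>
    (ContinuousAt.comp (f := fun s : ℝ => (s, s / 2))
      (continuousAt_integral_indicator hf hg (half_pos ht) (half_lt_self ht))
      (by fun_prop)).continuousWithinAt
  refine hcont.congr fun t ht =>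
    intervalIntegral.integral_congr_Ioo_of_le (half_pos ht).le fun τ hτ => ?_
  have htτ : t - τ ∈ Ioi 0 := mem_Ioi.2 (by linarith [hτ.2, half_lt_self (mem_Ioi.1 ht)])
  simp only [indicator_of_mem htτ, indicator_of_mem (mem_Ioi.2 hτ.1)]

theorem ContinuousLocallyIntegrable.lconv (hf : ContinuousLocallyIntegrable f)
    (hg : ContinuousLocallyIntegrable g) : ContinuousLocallyIntegrable (lconv f g) where
  continuousOn := ((continuousOn_integral_half hf hg).add (continuousOn_integral_half hg hf)).congr
    fun _ ht => lconv_eq_integral_half_add hf hg ht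
  intervalIntegrable T hT := intervalIntegrable_lconv hT.le (hf.intervalIntegrable T hT)
    (hg.intervalIntegrable T hT)

theorem convolution_indicator (f g : ℝ → ℝ) :
    convolution (indicator (Ioi 0) f) (indicator (Ioi 0) g) (ContinuousLinearMap.mul ℝ ℝ) =
      indicator (Ioi 0) (lconv f g) := by
  rw [← posConvolution_mul]
  exact (posConvolution_eq_convolution_indicator f g _ volume).symm

theorem convolutionExists_indicator (hf : ContinuousLocallyIntegrable f)
    (hg : ContinuousLocallyIntegrable g) :
    ConvolutionExists (indicator (Ioi 0) f) (indicator (Ioi 0) g)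
      (ContinuousLinearMap.mul ℝ ℝ) := by
  intro x
  have h_integrand : (fun τ => indicator (Ioi 0) f τ * indicator (Ioi 0) g (x - τ)) =
      indicator (Ioo 0 x) (fun τ => g (x - τ) * f τ) := by
    ext τ
    simp only [indicator_apply, mem_Ioi, mem_Ioo, sub_pos]
    split_ifs <;> simp_all [mul_comm]
  simp only [ConvolutionExistsAt, ContinuousLinearMap.mul_apply', h_integrand]
  rcases le_or_gt x 0 with hx | hx
  · simp [Ioo_eq_empty_of_le hx]
  · exact ((intervalIntegrable_iff_integrableOn_Ioo_of_le hx.le).1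
      (intervalIntegrable_comp_sub_mul hg hf hx)).integrable_indicator measurableSet_Ioo

theorem lconv_assoc (hf : ContinuousLocallyIntegrable f) (hg : ContinuousLocallyIntegrable g)
    (hh : ContinuousLocallyIntegrable h) :
    EqOn (lconv (lconv f g) h) (lconv f (lconv g h)) (Ioi 0) := by
  intro t ht
  have hassoc := convolution_assoc (ContinuousLinearMap.mul ℝ ℝ) (ContinuousLinearMap.mul ℝ ℝ)
    (ContinuousLinearMap.mul ℝ ℝ) (ContinuousLinearMap.mul ℝ ℝ) (x₀ := t) mul_assoc
    hf.measurable_indicator.aestronglyMeasurable hg.measurable_indicator.aestronglyMeasurable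
    hh.measurable_indicator.aestronglyMeasurable
    (Eventually.of_forall (convolutionExists_indicator hf hg))
    (Eventually.of_forall fun x => by
      simp only [norm_indicator_eq_indicator_norm]
      exact convolutionExists_indicator hg.norm hh.norm x)
    (by
      simp only [norm_indicator_eq_indicator_norm]
      rw [convolution_indicator]
      exact convolutionExists_indicator hf.norm (hg.norm.lconv hh.norm) t)
  simpa only [convolution_indicator, indicator_of_mem ht] using hassoc

theorem lconv_left_comm (hf : ContinuousLocallyIntegrable f) (hg : ContinuousLocallyIntegrable g)
    (hh : ContinuousLocallyIntegrable h) :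
    EqOn (lconv f (lconv g h)) (lconv g (lconv f h)) (Ioi 0) := by
  refine (lconv_assoc hf hg hh).symm.trans ?_
  rw [lconv_comm f g]
  exact lconv_assoc hg hf hh

end LaplaceConvolution

section IteratedIntegration

variable {f g : ℝ → ℝ} {t : ℝ}

theorem lconv_one_left (g : ℝ → ℝ) : lconv (fun _ => 1) g = fun t => ∫ τ in (0 : ℝ)..t, g τ := by
  ext t
  simp only [lconv, one_mul]

theorem lconv_monomialKernel_one (m : ℕ) :
    lconv (monomialKernel m) (fun _ => 1) = monomialKernel (m + 1) := by
  rw [lconv_comm, lconv_one_left]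
  ext t
  simp only [monomialKernel, intervalIntegral.integral_div, integral_pow, Nat.factorial_succ]
  push_cast
  field_simp
  simp

theorem lconv_monomialKernel_succ (m : ℕ) (hg : ContinuousLocallyIntegrable g) :
    EqOn (lconv (monomialKernel (m + 1)) g)
      (lconv (monomialKernel m) (lconv (fun _ => 1) g)) (Ioi 0) := by
  rw [← lconv_monomialKernel_one]
  exact lconv_assoc (continuousLocallyIntegrable_monomialKernel m)
    (.of_continuous continuous_const) hg

theorem hasDerivAt_lconv_one (hg : ContinuousLocallyIntegrable g) (ht : 0 < t) :
    HasDerivAt (lconv (fun _ => 1) g) (g t) t := by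
  rw [lconv_one_left]
  exact intervalIntegral.integral_hasDerivAt_right (hg.intervalIntegrable t ht)
    (hg.continuousOn.stronglyMeasurableAtFilter isOpen_Ioi t ht)
    (hg.continuousOn.continuousAt (Ioi_mem_nhds ht))

theorem iteratedDeriv_lconv_monomialKernel (m : ℕ) (hg : ContinuousLocallyIntegrable g) :
    EqOn (iteratedDeriv (m + 1) (lconv (monomialKernel m) g)) g (Ioi 0) := by
  induction m generalizing g with
  | zero =>
    intro t ht
    rw [iteratedDeriv_one, monomialKernel_zero]
    exact (hasDerivAt_lconv_one hg ht).deriv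
  | succ m ih =>
    have hone : ContinuousLocallyIntegrable (lconv (fun _ => 1) g) :=
      .lconv (.of_continuous continuous_const) hg
    have hderiv : EqOn (iteratedDeriv (m + 1) (lconv (monomialKernel (m + 1)) g))
        (lconv (fun _ => 1) g) (Ioi 0) :=
      ((lconv_monomialKernel_succ m hg).iteratedDeriv_of_isOpen isOpen_Ioi (m + 1)).trans (ih hone)
    intro t ht
    rw [iteratedDeriv_succ]
    exact ((hasDerivAt_lconv_one hg ht).congr_of_eventuallyEq
      (hderiv.eventuallyEq_of_mem (Ioi_mem_nhds ht))).deriv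

theorem eqOn_const_add_lconv_one_deriv {a : ℝ} (hf : ∀ t, 0 < t → DifferentiableAt ℝ f t)
    (hf' : ContinuousLocallyIntegrable (deriv f)) (ha : Tendsto f (𝓝[>] 0) (𝓝 a)) :
    EqOn f (fun t => a + lconv (fun _ => 1) (deriv f) t) (Ioi 0) := by
  intro t ht
  have hftc := intervalIntegral.integral_eq_sub_of_hasDerivAt_of_tendsto ht
    (fun x hx => (hf x hx.1).hasDerivAt) (hf'.intervalIntegrable t ht) ha
    ((hf t ht).continuousAt.tendsto.mono_left nhdsWithin_le_nhds)
  simp only [lconv_one_left, hftc, add_sub_cancel]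

theorem lconv_monomialKernel_const_add (m : ℕ) (a : ℝ) (hg : ContinuousLocallyIntegrable g) :
    EqOn (lconv (monomialKernel m) fun t => a + g t)
      (fun t => a * monomialKernel (m + 1) t + lconv (monomialKernel m) g t) (Ioi 0) := by
  intro t ht
  have hadd := intervalIntegral.integral_add
    (intervalIntegrable_comp_sub_mul (continuousLocallyIntegrable_monomialKernel m)
      (.of_continuous (continuous_const (y := a))) ht)
    (intervalIntegrable_comp_sub_mul (continuousLocallyIntegrable_monomialKernel m) hg ht)
  simp only [← lconv_monomialKernel_one, lconv, mul_add, mul_one, hadd,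
    intervalIntegral.integral_mul_const, mul_comm a]

theorem eqOn_sub_taylor_lconv_monomialKernel (n : ℕ) {c : ℕ → ℝ}
    (hf : ∀ j < n + 1, ∀ t, 0 < t → DifferentiableAt ℝ (iteratedDeriv j f) t)
    (hfn : ContinuousLocallyIntegrable (iteratedDeriv (n + 1) f))
    (hc : ∀ j < n + 1, Tendsto (iteratedDeriv j f) (𝓝[>] 0) (𝓝 (c j))) :
    EqOn (fun t => f t - ∑ j ∈ Finset.range (n + 1), c j * t ^ j / j.factorial)
      (lconv (monomialKernel n) (iteratedDeriv (n + 1) f)) (Ioi 0) := by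
  induction n with
  | zero =>
    intro t ht
    have hftc := eqOn_const_add_lconv_one_deriv (hf 0 one_pos)
      (by simpa only [iteratedDeriv_succ] using hfn) (hc 0 one_pos) ht
    simp only [iteratedDeriv_zero] at hftc
    simp [monomialKernel_zero, hftc]
  | succ n ih =>
    have hftc := eqOn_const_add_lconv_one_deriv (hf (n + 1) n.succ.lt_succ_self)
      (by simpa only [iteratedDeriv_succ] using hfn) (hc (n + 1) n.succ.lt_succ_self)
    rw [← iteratedDeriv_succ] at hftc
    have hone := ContinuousLocallyIntegrable.lconv
      (.of_continuous (continuous_const (y := 1))) hfn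
    have hfn' : ContinuousLocallyIntegrable (iteratedDeriv (n + 1) f) :=
      ((ContinuousLocallyIntegrable.of_continuous continuous_const).add hone).congr hftc.symm
    intro t ht
    have htaylor := ih (fun j hj => hf j (hj.trans (lt_add_one _))) hfn'
      (fun j hj => hc j (hj.trans (lt_add_one _))) ht
    rw [eqOn_lconv (eqOn_refl _ _) hftc ht,
      lconv_monomialKernel_const_add n _ hone ht] at htaylor
    simp only [← lconv_monomialKernel_succ n hfn ht, monomialKernel, ← mul_div_assoc] at htaylor
    simp only [Finset.sum_range_succ _ (n + 1), ← sub_sub, htaylor, add_sub_cancel_left]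

end IteratedIntegration

/- The left-hand side is the Caputo derivative `∗D_{(k)} f` of order `n + 1`. -/
theorem iteratedDeriv_lconv_sub_taylor {n : ℕ} {k f : ℝ → ℝ} {c : ℕ → ℝ}
    (hk : ContinuousLocallyIntegrable k)
    (hf : ∀ j < n + 1, ∀ t, 0 < t → DifferentiableAt ℝ (iteratedDeriv j f) t)
    (hfn : ContinuousLocallyIntegrable (iteratedDeriv (n + 1) f))
    (hc : ∀ j < n + 1, Tendsto (iteratedDeriv j f) (𝓝[>] 0) (𝓝 (c j))) :
    EqOn (iteratedDeriv (n + 1) (lconv k fun u =>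
        f u - ∑ j ∈ Finset.range (n + 1), c j * u ^ j / j.factorial))
      (lconv k (iteratedDeriv (n + 1) f)) (Ioi 0) := by
  have htaylor := eqOn_sub_taylor_lconv_monomialKernel n hf hfn hc
  have hremainder := (eqOn_lconv (eqOn_refl k _) htaylor).trans
    (lconv_left_comm hk (continuousLocallyIntegrable_monomialKernel n) hfn)
  exact (hremainder.iteratedDeriv_of_isOpen isOpen_Ioi (n + 1)).trans
    (iteratedDeriv_lconv_monomialKernel n (hk.lconv hfn))

theorem statement14_general {n : ℕ} {κ k f : ℝ → ℝ} {c : ℕ → ℝ}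
    (hκ : ContinuousLocallyIntegrable κ) (hk : ContinuousLocallyIntegrable k)
    (hL : ∀ t, 0 < t → lconv κ k t = t ^ n / n.factorial)
    (hf : ∀ j < n + 1, ∀ t, 0 < t → DifferentiableAt ℝ (iteratedDeriv j f) t)
    (hfn : ContinuousLocallyIntegrable (iteratedDeriv (n + 1) f))
    (hc : ∀ j < n + 1, Tendsto (iteratedDeriv j f) (𝓝[>] 0) (𝓝 (c j))) {t : ℝ} (ht : 0 < t) :
    lconv κ (iteratedDeriv (n + 1) (lconv k fun u =>
        f u - ∑ j ∈ Finset.range (n + 1), c j * u ^ j / j.factorial)) t =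
      f t - ∑ j ∈ Finset.range (n + 1), c j * t ^ j / j.factorial := by
  set fn := iteratedDeriv (n + 1) f
  calc
    _ = lconv κ (lconv k fn) t :=
      eqOn_lconv (eqOn_refl κ _) (iteratedDeriv_lconv_sub_taylor hk hf hfn hc) ht
    _ = lconv (lconv κ k) fn t := (lconv_assoc hκ hk hfn ht).symm
    _ = lconv (monomialKernel n) fn t := eqOn_lconv hL (eqOn_refl fn _) ht
    _ = _ := (eqOn_sub_taylor_lconv_monomialKernel n hf hfn hc ht).symm

/-- Second Fundamental Theorem for the GFD of arbitrary order, Caputo case: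
for a pair `(κ, k) ∈ L_n` and `f ∈ Cⁿ_{-1}(0,∞)` with `f^{(j)}(0+) = c j`,
`(I_{(κ)} ∗D_{(k)} f)(t) = f(t) - ∑_{j=0}^{n-1} f^{(j)}(0) h_{j+1}(t)` for all `t > 0`,
where `h_{j+1}(t) = t^j/j!`. -/
theorem statement14 (n : ℕ) (hn : 1 ≤ n) (κ k : ℝ → ℝ)
    (hκ : Cm1 κ) (hk : Cm10 k)
    (hL : ∀ t : ℝ, 0 < t → lconv κ k t = t ^ (n - 1) / (n - 1).factorial)
    (f : ℝ → ℝ)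
    (hf_diff : ∀ j < n, ∀ t : ℝ, 0 < t → DifferentiableAt ℝ (iteratedDeriv j f) t)
    (hfn : Cm1 (iteratedDeriv n f))
    (c : ℕ → ℝ)
    (hc : ∀ j < n, Filter.Tendsto (iteratedDeriv j f)
      (nhdsWithin 0 (Set.Ioi 0)) (nhds (c j))) :
    ∀ t : ℝ, 0 < t →
      lconv κ (fun s =>
        iteratedDeriv n (lconv k (fun u =>
          f u - ∑ j ∈ Finset.range n, c j * u ^ j / j.factorial)) s) t
        = f t - ∑ j ∈ Finset.range n, c j * t ^ j / j.factorial := by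
  obtain ⟨m, rfl⟩ := Nat.exists_eq_add_of_le' hn
  exact fun t ht => statement14_general hκ.continuousLocallyIntegrable
    hk.cm1.continuousLocallyIntegrable hL hf_diff hfn.continuousLocallyIntegrable hc ht
end

section
/- Let m ∈ ℕ₀, let f ∈ C^m_{−1}(0,∞) with f(0) = f′(0) = ⋯ = f^{(m−1)}(0) = 0 (limits as t → 0+), and let g ∈ C¹_{−1}(0,∞). Then the Laplace convolution h = f * g belongs to C^{m+1}_{−1}(0,∞) and satisfies h(0) = h′(0) = ⋯ = h^{(m)}(0) = 0. -/
open Real MeasureTheory Set Filter Topology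

/-! Let `I` denote integration from `0`. On `(0,∞)`, a function `f` lies in `C^m_{-1}` with
vanishing derivatives of order less than `m` at `0+` exactly when `f = I^m φ` with `φ ∈ C_{-1}`,
and any `g ∈ C^1_{-1}` is of the form `c + I g'`. Since `I` is convolution with `1`, it commutes
with convolution, so
`f * g = I^m (φ * (c + I g')) = I^{m+1} (c φ + φ * g')`,
and `c φ + φ * g'` is in `C_{-1}` because `C_{-1}` is closed under convolution. -/

section Integral

variable {E : Type*} [NormedAddCommGroup E] [NormedSpace ℝ E]

theorem integral_integral_swap_triangle {F : ℝ → ℝ → E} {a b : ℝ} (hab : a ≤ b)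
    (hF : IntegrableOn (Function.uncurry F) ({z | z.2 ≤ z.1} ∩ Ioc a b ×ˢ Ioc a b)) :
    ∫ r in a..b, ∫ s in a..r, F r s = ∫ s in a..b, ∫ r in s..b, F r s := by
  set G : ℝ → ℝ → E := fun r s => {z : ℝ × ℝ | z.2 ≤ z.1}.indicator (Function.uncurry F) (r, s)
  have hG : Integrable (Function.uncurry G)
      ((volume.restrict (Ioc a b)).prod (volume.restrict (Ioc a b))) := by
    rw [Measure.prod_restrict]
    exact (integrableOn_indicator_iff (measurableSet_le measurable_snd measurable_fst)).2 hF
  have inner_left {r : ℝ} (hr : r ∈ Ioc a b) :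
      ∫ s in a..r, F r s = ∫ s in Ioc a b, G r s := by
    have : G r = (Iic r).indicator (F r) := rfl
    rw [this, setIntegral_indicator measurableSet_Iic, Ioc_inter_Iic, min_eq_right hr.2,
      intervalIntegral.integral_of_le hr.1.le]
  have inner_right {s : ℝ} (hs : s ∈ Ioc a b) :
      ∫ r in s..b, F r s = ∫ r in Ioc a b, G r s := by
    have hG_s : (fun r => G r s) = (Ici s).indicator fun r => F r s := rfl
    have hIcc : Ioc a b ∩ Ici s = Icc s b := by
      ext r
      exact ⟨fun h => ⟨h.2, h.1.2⟩, fun h => ⟨⟨hs.1.trans_le h.1, h.2⟩, h.1⟩⟩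
    rw [hG_s, setIntegral_indicator measurableSet_Ici, hIcc, integral_Icc_eq_integral_Ioc,
      intervalIntegral.integral_of_le hs.2]
  rw [intervalIntegral.integral_of_le hab, intervalIntegral.integral_of_le hab,
    setIntegral_congr_fun measurableSet_Ioc fun _ => inner_left,
    setIntegral_congr_fun measurableSet_Ioc fun _ => inner_right]
  exact integral_integral_swap hG

theorem continuous_intervalIntegral_smul {X : Type*} [TopologicalSpace X]
    [FirstCountableTopology X] [WeaklyLocallyCompactSpace X] {k : ℝ → ℝ} {F : X → ℝ → E}
    {a b : ℝ} (hk : IntervalIntegrable k volume a b) (hF : Continuous (Function.uncurry F)) :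
    Continuous fun x => ∫ s in a..b, k s • F x s := by
  refine continuous_iff_continuousAt.2 fun x₀ => ?_
  obtain ⟨K, hK, hx₀⟩ := exists_compact_mem_nhds x₀
  obtain ⟨M, hM⟩ := (hK.prod isCompact_uIcc).exists_bound_of_continuousOn hF.continuousOn
  have hF_right (x : X) : Continuous (F x) := hF.comp (.prodMk_right x)
  have hF_left (s : ℝ) : Continuous fun x => F x s := hF.comp (.prodMk_left s)
  refine intervalIntegral.continuousAt_of_dominated_interval (bound := fun s => ‖k s‖ * M)
    ?_ ?_ (hk.norm.mul_const M) ?_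
  · exact .of_forall fun x =>
      hk.def'.aestronglyMeasurable.smul (hF_right x).aestronglyMeasurable
  · filter_upwards [hx₀] with x hx
    refine .of_forall fun s hs => ?_
    rw [norm_smul]
    gcongr
    exact hM (x, s) ⟨hx, uIoc_subset_uIcc hs⟩
  · exact .of_forall fun s _ => ((hF_left s).const_smul (k s)).continuousAt

end Integral

theorem lconv_comm_s19 (u v : ℝ → ℝ) : lconv u v = lconv v u := by
  funext t
  simpa only [lconv, mul_comm, sub_sub_cancel, sub_self, sub_zero] using
    intervalIntegral.integral_comp_sub_left (a := 0) (b := t) (fun s => u s * v (t - s)) t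

theorem lconv_congr_s19 {u u' v v' : ℝ → ℝ} {t : ℝ} (ht : 0 ≤ t) (hu : EqOn u u' (Ioo 0 t))
    (hv : EqOn v v' (Ioo 0 t)) : lconv u v t = lconv u' v' t :=
  intervalIntegral.integral_congr_Ioo_of_le ht fun s hs => by
    have hts : t - s ∈ Ioo 0 t := ⟨sub_pos.2 hs.2, sub_lt_self t hs.1⟩
    simp only [hu hts, hv hs]

/-- The substitution `τ = t s` moves all dependence on `t` out of the singular kernel. -/
theorem lconv_rpow_mul (p q : ℝ) (φ ψ : ℝ → ℝ) {t : ℝ} (ht : 0 < t) :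
    lconv (fun s => s ^ p * φ s) (fun s => s ^ q * ψ s) t =
      t ^ (p + q + 1) *
        ∫ s in (0 : ℝ)..1, ((1 - s) ^ p * s ^ q) • (φ (t * (1 - s)) * ψ (t * s)) := by
  have scaling := intervalIntegral.mul_integral_comp_mul_left (a := 0) (b := 1)
    (f := fun τ => (t - τ) ^ p * φ (t - τ) * (τ ^ q * ψ τ)) t
  rw [mul_zero, mul_one] at scaling
  rw [lconv, ← scaling, Real.rpow_add_one ht.ne', mul_comm (t ^ (p + q)) t, mul_assoc,
    ← intervalIntegral.integral_const_mul (t ^ (p + q))]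
  congr 1
  refine intervalIntegral.integral_congr_Ioo_of_le zero_le_one fun s hs => ?_
  have h1s : 0 ≤ 1 - s := sub_nonneg.2 hs.2.le
  simp only [show t - t * s = t * (1 - s) by ring, Real.mul_rpow ht.le h1s,
    Real.mul_rpow ht.le hs.1.le, Real.rpow_add ht, smul_eq_mul]
  ring

namespace Cm1

variable {f g : ℝ → ℝ}

protected theorem congr (hf : Cm1 f) (hgf : EqOn g f (Ioi 0)) : Cm1 g := by
  obtain ⟨p, hp, f₁, hf₁, hf⟩ := hf
  exact ⟨p, hp, f₁, hf₁, fun t ht => (hgf ht).trans (hf t ht)⟩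

theorem rpow {p : ℝ} (hp : -1 < p) : Cm1 fun t => t ^ p :=
  ⟨p, hp, fun _ => 1, continuousOn_const, fun t _ => (mul_one (t ^ p)).symm⟩

theorem const (c : ℝ) : Cm1 fun _ => c :=
  ⟨0, by norm_num, fun _ => c, continuousOn_const, fun t _ => by rw [Real.rpow_zero, one_mul]⟩

theorem const_mul (hf : Cm1 f) (c : ℝ) : Cm1 fun t => c * f t := by
  obtain ⟨p, hp, f₁, hf₁, hf⟩ := hf
  exact ⟨p, hp, fun t => c * f₁ t, hf₁.const_mul c, fun t ht => by
    simp only [hf t ht, mul_left_comm c]⟩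

theorem add (hf : Cm1 f) (hg : Cm1 g) : Cm1 fun t => f t + g t := by
  obtain ⟨p, hp, f₁, hf₁, hf⟩ := hf
  obtain ⟨q, hq, g₁, hg₁, hg⟩ := hg
  set r := min p q
  have rpow_cont {e : ℝ} (he : r ≤ e) : Continuous fun t : ℝ => t ^ (e - r) :=
    Real.continuous_rpow_const (sub_nonneg.2 he)
  refine ⟨r, lt_min hp hq, fun t => t ^ (p - r) * f₁ t + t ^ (q - r) * g₁ t, ?_, fun t ht => ?_⟩
  · exact ((rpow_cont (min_le_left p q)).continuousOn.mul hf₁).add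
      ((rpow_cont (min_le_right p q)).continuousOn.mul hg₁)
  · beta_reduce
    rw [hf t ht, hg t ht, mul_add, ← mul_assoc, ← mul_assoc, ← Real.rpow_add ht,
      ← Real.rpow_add ht, add_sub_cancel, add_sub_cancel]

theorem exists_continuous (hf : Cm1 f) :
    ∃ p : ℝ, -1 < p ∧ ∃ φ : ℝ → ℝ, Continuous φ ∧ EqOn f (fun t => t ^ p * φ t) (Ioi 0) := by
  obtain ⟨p, hp, f₁, hf₁, hf⟩ := hf
  refine ⟨p, hp, fun t => f₁ (max t 0),
    hf₁.comp_continuous (by fun_prop) fun t => le_max_right t 0, fun t ht => ?_⟩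
  simp only [max_eq_left (mem_Ioi.1 ht).le, hf t ht]

theorem continuousOn (hf : Cm1 f) : ContinuousOn f (Ioi 0) := by
  obtain ⟨p, -, f₁, hf₁, hf⟩ := hf
  exact ((continuousOn_id.rpow_const fun t ht => .inl (mem_Ioi.1 ht).ne').mul
    (hf₁.mono Ioi_subset_Ici_self)).congr hf

theorem intervalIntegrable (hf : Cm1 f) {a b : ℝ} (ha : 0 ≤ a) (hb : 0 ≤ b) :
    IntervalIntegrable f volume a b := by
  obtain ⟨p, hp, f₁, hf₁, hf⟩ := hf
  have hsub : uIcc a b ⊆ Ici 0 := fun t ht => (le_min ha hb).trans ht.1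
  exact ((intervalIntegral.intervalIntegrable_rpow' hp).mul_continuousOn (hf₁.mono hsub)).congr_uIoo
    fun t ht => (hf t ((le_min ha hb).trans_lt ht.1)).symm

/-- Each factor is singular at only one end of `[0, t]`, so the interval is split at `t / 2`. -/
theorem intervalIntegrable_lconv (hf : Cm1 f) (hg : Cm1 g) {t : ℝ} (ht : 0 < t) :
    IntervalIntegrable (fun s => f (t - s) * g s) volume 0 t := by
  have left_half {u v : ℝ → ℝ} (hu : Cm1 u) (hv : Cm1 v) :
      IntervalIntegrable (fun s => u (t - s) * v s) volume 0 (t / 2) := by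
    refine (hv.intervalIntegrable le_rfl (half_pos ht).le).continuousOn_mul
      (hu.continuousOn.comp (by fun_prop) fun s hs => ?_)
    rw [uIcc_of_le (half_pos ht).le] at hs
    exact sub_pos.2 (hs.2.trans_lt (half_lt_self ht))
  have right_half : IntervalIntegrable (fun s => f (t - s) * g s) volume (t / 2) t := by
    simpa only [mul_comm, sub_sub_cancel, sub_zero, sub_half] using
      ((left_half hg hf).comp_sub_left t).symm
  exact (left_half hf hg).trans right_half

protected theorem lconv (hf : Cm1 f) (hg : Cm1 g) : Cm1 (lconv f g) := by
  obtain ⟨p, hp, φ, hφ, hf⟩ := hf.exists_continuous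
  obtain ⟨q, hq, ψ, hψ, hg⟩ := hg.exists_continuous
  have kernel_integrable : IntervalIntegrable (fun s : ℝ => (1 - s) ^ p * s ^ q) volume 0 1 :=
    (rpow hp).intervalIntegrable_lconv (rpow hq) one_pos
  refine ⟨p + q + 1, by linarith, _,
    (continuous_intervalIntegral_smul kernel_integrable
      (F := fun t s => φ (t * (1 - s)) * ψ (t * s)) (by fun_prop)).continuousOn, fun t ht => ?_⟩
  rw [lconv_congr_s19 ht.le (hf.mono Ioo_subset_Ioi_self) (hg.mono Ioo_subset_Ioi_self),
    lconv_rpow_mul p q φ ψ ht]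

end Cm1

/-- The primitive of `u` that vanishes at `0`, i.e. the operator `I` of integration from `0`,
whose powers `I^m` are written `primitive^[m]`. -/
noncomputable def primitive (u : ℝ → ℝ) : ℝ → ℝ :=
  fun t => ∫ s in (0 : ℝ)..t, u s

section Primitive

variable {u v : ℝ → ℝ} {t : ℝ}

theorem primitive_eq_lconv_one (u : ℝ → ℝ) : primitive u = lconv 1 u := by
  funext t
  simp only [primitive, lconv, Pi.one_apply, one_mul]

theorem primitive_congr (ht : 0 ≤ t) (huv : EqOn u v (Ioo 0 t)) :
    primitive u t = primitive v t :=
  intervalIntegral.integral_congr_Ioo_of_le ht huv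

theorem iterate_primitive_congr (huv : EqOn u v (Ioi 0)) (m : ℕ) :
    EqOn (primitive^[m] u) (primitive^[m] v) (Ioi 0) := by
  induction m with
  | zero => exact huv
  | succ m ih =>
    intro t ht
    rw [Function.iterate_succ_apply', Function.iterate_succ_apply']
    exact primitive_congr (mem_Ioi.1 ht).le (ih.mono Ioo_subset_Ioi_self)

protected theorem Cm1.primitive (hu : Cm1 u) : Cm1 (primitive u) := by
  rw [primitive_eq_lconv_one]
  exact (Cm1.const 1).lconv hu

theorem Cm1.iterate_primitive (hu : Cm1 u) (m : ℕ) : Cm1 (primitive^[m] u) :=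
  Function.Iterate.rec Cm1 hu (fun _ => Cm1.primitive) m

theorem hasDerivAt_primitive (ht : 0 < t) (hu : IntervalIntegrable u volume 0 t)
    (huc : ContinuousOn u (Ioi 0)) : HasDerivAt (primitive u) (u t) t :=
  intervalIntegral.integral_hasDerivAt_right hu
    (huc.stronglyMeasurableAtFilter isOpen_Ioi t ht) (huc.continuousAt (Ioi_mem_nhds ht))

theorem tendsto_primitive_nhdsGT_zero (ht : 0 < t) (hu : IntervalIntegrable u volume 0 t) :
    Tendsto (primitive u) (𝓝[>] 0) (𝓝 0) := by
  have hcont : ContinuousWithinAt (primitive u) (uIcc 0 t) 0 :=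
    intervalIntegral.continuousOn_primitive_interval' hu left_mem_uIcc 0 left_mem_uIcc
  have hzero : primitive u 0 = 0 := intervalIntegral.integral_same
  rw [ContinuousWithinAt, hzero, uIcc_of_le ht.le] at hcont
  rw [← nhdsWithin_Ioo_eq_nhdsGT ht]
  exact hcont.mono_left (nhdsWithin_mono 0 Ioo_subset_Icc_self)

theorem exists_eqOn_const_add_primitive (huv : ∀ t, 0 < t → HasDerivAt u (v t) t)
    (hv : ∀ t, 0 < t → IntervalIntegrable v volume 0 t) :
    ∃ c, EqOn u (fun t => c + primitive v t) (Ioi 0) := by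
  refine ⟨u 1 - primitive v 1, fun t (ht : 0 < t) => ?_⟩
  have integrable_one_t : IntervalIntegrable v volume 1 t := (hv 1 one_pos).symm.trans (hv t ht)
  have ftc : ∫ s in (1 : ℝ)..t, v s = u t - u 1 :=
    intervalIntegral.integral_eq_sub_of_hasDerivAt
      (fun s hs => huv s ((lt_min one_pos ht).trans_le hs.1)) integrable_one_t
  have split : primitive v 1 + ∫ s in (1 : ℝ)..t, v s = primitive v t :=
    intervalIntegral.integral_add_adjacent_intervals (hv 1 one_pos) integrable_one_t
  linarith

theorem eqOn_primitive_of_tendsto_zero (huv : ∀ t, 0 < t → HasDerivAt u (v t) t)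
    (hv : ∀ t, 0 < t → IntervalIntegrable v volume 0 t) (hu : Tendsto u (𝓝[>] 0) (𝓝 0)) :
    EqOn u (primitive v) (Ioi 0) := by
  intro t (ht : 0 < t)
  have ftc := intervalIntegral.integral_eq_sub_of_hasDerivAt_of_tendsto ht
    (fun s hs => huv s hs.1) (hv t ht) hu
    ((huv t ht).continuousAt.tendsto.mono_left nhdsWithin_le_nhds)
  exact (ftc.trans (sub_zero _)).symm

theorem integrableOn_lconv_triangle (hu : IntegrableOn u (Ioc 0 t))
    (hv : IntegrableOn v (Ioc 0 t)) :
    IntegrableOn (fun z : ℝ × ℝ => u (z.1 - z.2) * v z.2)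
      ({z | z.2 ≤ z.1} ∩ Ioc 0 t ×ˢ Ioc 0 t) := by
  rw [← integrableOn_Icc_iff_integrableOn_Ioc] at hu
  have hconv := ((integrable_indicator_iff measurableSet_Ioc).2 hv).convolution_integrand
    (ContinuousLinearMap.mul ℝ ℝ) ((integrable_indicator_iff measurableSet_Icc).2 hu)
  refine hconv.integrableOn.congr_fun (fun z hz => ?_)
    ((measurableSet_le measurable_snd measurable_fst).inter
      (measurableSet_Ioc.prod measurableSet_Ioc))
  obtain ⟨hle, hr, hs⟩ := hz
  have hsub : z.1 - z.2 ∈ Icc 0 t := ⟨sub_nonneg.2 hle, by linarith [hr.2, hs.1]⟩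
  simp only [indicator_of_mem hs, indicator_of_mem hsub, ContinuousLinearMap.mul_apply', mul_comm]

theorem lconv_primitive (ht : 0 ≤ t) (hu : IntervalIntegrable u volume 0 t)
    (hv : IntervalIntegrable v volume 0 t) :
    lconv (primitive u) v t = primitive (lconv u v) t := by
  have inner (s : ℝ) : ∫ r in s..t, u (r - s) * v s = primitive u (t - s) * v s := by
    rw [intervalIntegral.integral_mul_const, intervalIntegral.integral_comp_sub_right, sub_self,
      primitive]
  have dirichlet := integral_integral_swap_triangle (F := fun r s => u (r - s) * v s) ht
    (integrableOn_lconv_triangle hu.1 hv.1)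
  simp only [inner] at dirichlet
  exact dirichlet.symm

theorem lconv_iterate_primitive (hu : Cm1 u) (hv : Cm1 v) (m : ℕ) :
    EqOn (lconv (primitive^[m] u) v) (primitive^[m] (lconv u v)) (Ioi 0) := by
  induction m with
  | zero => exact eqOn_refl _ _
  | succ m ih =>
    intro t (ht : 0 < t)
    rw [Function.iterate_succ_apply', Function.iterate_succ_apply',
      lconv_primitive ht.le ((hu.iterate_primitive m).intervalIntegrable le_rfl ht.le)
        (hv.intervalIntegrable le_rfl ht.le)]
    exact primitive_congr ht.le (ih.mono Ioo_subset_Ioi_self)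

theorem lconv_const_add_primitive (hu : Cm1 u) (hv : Cm1 v) (c : ℝ) :
    EqOn (lconv u fun t => c + primitive v t)
      (primitive fun t => c * u t + lconv u v t) (Ioi 0) := by
  intro t (ht : 0 < t)
  have hcu := (hu.const_mul c).intervalIntegrable le_rfl ht.le
  calc lconv u (fun s => c + primitive v s) t
    _ = ∫ s in (0 : ℝ)..t, (c * u s + primitive v (t - s) * u s) := by
      rw [lconv_comm_s19]
      simp only [lconv, add_mul]
    _ = primitive (fun s => c * u s) t + lconv (primitive v) u t :=
      intervalIntegral.integral_add hcu (hv.primitive.intervalIntegrable_lconv hu ht)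
    _ = primitive (fun s => c * u s) t + primitive (lconv u v) t := by
      rw [lconv_primitive ht.le (hv.intervalIntegrable le_rfl ht.le)
        (hu.intervalIntegrable le_rfl ht.le), lconv_comm_s19 v]
    _ = primitive (fun s => c * u s + lconv u v s) t :=
      (intervalIntegral.integral_add hcu ((hu.lconv hv).intervalIntegrable le_rfl ht.le)).symm

end Primitive

/-- The functions of class `C^m_{-1}(0,∞)` all of whose derivatives of order less than `m` tend
to `0` at `0+`. Unlike in the paper's notation, differentiability is explicit, because
`iteratedDeriv` has a junk value where a function is not differentiable. -/
def VanishingCm1 (m : ℕ) (f : ℝ → ℝ) : Prop :=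
  (∀ j < m, ∀ t : ℝ, 0 < t → DifferentiableAt ℝ (iteratedDeriv j f) t) ∧
    Cm1 (iteratedDeriv m f) ∧
    ∀ j < m, Tendsto (iteratedDeriv j f) (𝓝[>] 0) (𝓝 0)

theorem vanishingCm1_zero {f : ℝ → ℝ} : VanishingCm1 0 f ↔ Cm1 f := by
  simp [VanishingCm1]

theorem vanishingCm1_succ {m : ℕ} {f : ℝ → ℝ} :
    VanishingCm1 (m + 1) f ↔ (∀ t, 0 < t → DifferentiableAt ℝ f t) ∧
      Tendsto f (𝓝[>] 0) (𝓝 0) ∧ VanishingCm1 m (deriv f) := by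
  simp only [VanishingCm1, Nat.forall_lt_succ_left, iteratedDeriv_zero, iteratedDeriv_succ']
  tauto

theorem vanishingCm1_iff_eqOn_iterate_primitive {m : ℕ} {f : ℝ → ℝ} :
    VanishingCm1 m f ↔ ∃ φ, Cm1 φ ∧ EqOn f (primitive^[m] φ) (Ioi 0) := by
  induction m generalizing f with
  | zero =>
    rw [vanishingCm1_zero]
    exact ⟨fun hf => ⟨f, hf, eqOn_refl f _⟩, fun ⟨φ, hφ, hfφ⟩ => hφ.congr hfφ⟩
  | succ m ih =>
    simp only [vanishingCm1_succ, ih, Function.iterate_succ_apply']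
    constructor
    · rintro ⟨hd, hf0, φ, hφ, hf'⟩
      exact ⟨φ, hφ, eqOn_primitive_of_tendsto_zero
        (fun t ht => (hd t ht).hasDerivAt.congr_deriv (hf' ht))
        (fun t ht => (hφ.iterate_primitive m).intervalIntegrable le_rfl ht.le) hf0⟩
    · rintro ⟨φ, hφ, hf⟩
      have hI := hφ.iterate_primitive m
      have hderiv (t : ℝ) (ht : 0 < t) : HasDerivAt f (primitive^[m] φ t) t :=
        (hasDerivAt_primitive ht (hI.intervalIntegrable le_rfl ht.le)
          hI.continuousOn).congr_of_eventuallyEq (hf.eventuallyEq_of_mem (Ioi_mem_nhds ht))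
      have hf0 : Tendsto f (𝓝[>] 0) (𝓝 0) :=
        (tendsto_primitive_nhdsGT_zero one_pos
          (hI.intervalIntegrable le_rfl zero_le_one)).congr'
          (hf.symm.eventuallyEq_of_mem self_mem_nhdsWithin)
      exact ⟨fun t ht => (hderiv t ht).differentiableAt, hf0, φ, hφ,
        fun t ht => (hderiv t ht).deriv⟩

/-- If `f ∈ C^m_{-1}(0,∞)` with `f(0+) = f'(0+) = ⋯ = f^{(m-1)}(0+) = 0`
and `g ∈ C¹_{-1}(0,∞)`, then `h = f * g` belongs to `C^{m+1}_{-1}(0,∞)` and satisfies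
`h(0+) = h'(0+) = ⋯ = h^{(m)}(0+) = 0`. -/
theorem statement19 (m : ℕ) (f g : ℝ → ℝ)
    (hf_diff : ∀ j < m, ∀ t : ℝ, 0 < t → DifferentiableAt ℝ (iteratedDeriv j f) t)
    (hfm : Cm1 (iteratedDeriv m f))
    (hf0 : ∀ j < m, Filter.Tendsto (iteratedDeriv j f)
      (nhdsWithin 0 (Set.Ioi 0)) (nhds 0))
    (hg_diff : ∀ t : ℝ, 0 < t → DifferentiableAt ℝ g t)
    (hg' : Cm1 (deriv g)) :
    (∀ j < m + 1, ∀ t : ℝ, 0 < t →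
        DifferentiableAt ℝ (iteratedDeriv j (lconv f g)) t) ∧
      Cm1 (iteratedDeriv (m + 1) (lconv f g)) ∧
      ∀ j < m + 1, Filter.Tendsto (iteratedDeriv j (lconv f g))
        (nhdsWithin 0 (Set.Ioi 0)) (nhds 0) := by
  obtain ⟨φ, hφ, hfφ⟩ := vanishingCm1_iff_eqOn_iterate_primitive.1 ⟨hf_diff, hfm, hf0⟩
  obtain ⟨c, hg⟩ := exists_eqOn_const_add_primitive (fun t ht => (hg_diff t ht).hasDerivAt)
    fun t ht => hg'.intervalIntegrable le_rfl ht.le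
  set g₁ : ℝ → ℝ := fun t => c + primitive (deriv g) t
  set w : ℝ → ℝ := fun t => c * φ t + lconv φ (deriv g) t
  have hg₁ : Cm1 g₁ := (Cm1.const c).add hg'.primitive
  have hw : Cm1 w := (hφ.const_mul c).add (hφ.lconv hg')
  refine vanishingCm1_iff_eqOn_iterate_primitive.2 ⟨w, hw, fun t ht => ?_⟩
  calc lconv f g t
    _ = lconv (primitive^[m] φ) g₁ t :=
      lconv_congr_s19 (mem_Ioi.1 ht).le (hfφ.mono Ioo_subset_Ioi_self) (hg.mono Ioo_subset_Ioi_self)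
    _ = primitive^[m] (lconv φ g₁) t := lconv_iterate_primitive hφ hg₁ m ht
    _ = primitive^[m] (primitive w) t :=
      iterate_primitive_congr (lconv_const_add_primitive hφ hg' c) m ht
    _ = primitive^[m + 1] w t := by rw [Function.iterate_succ_apply]
end
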